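/- In a pairwise binary MRF on a single edge {s,t} with symmetric potentials, the α-BP message log-ratio update F(z_{ts}, z_{st}) = ((1−α)z_{ts} + H(2θ_s + (1−α)z_{st}; 2αθ), (1−α)z_{st} + H(2θ_t + (1−α)z_{ts}; 2αθ)) is a contraction on ℝ² in the ℓ^∞ norm whenever |1−α|(1 + tanh(|αθ|)) < 1. -/

import Mathlib

open Real

theorem tanh_abs_eq_aux (c : ℝ) :
    Real.tanh |c| = |Real.exp (2 * c) - 1| / (Real.exp (2 * c) + 1) := by
  have h1 : ∀ x : ℝ, Real.tanh x = (Real.exp (2 * x) - 1) / (Real.exp (2 * x) + 1) := by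
    intro x
    have hx : Real.exp (2 * x) = Real.exp x * Real.exp x := by
      rw [← Real.exp_add]; ring_nf
    have hp := Real.exp_pos x
    rw [Real.tanh_eq_sinh_div_cosh, Real.sinh_eq, Real.cosh_eq, Real.exp_neg, hx]
    field_simp
  have hp := Real.exp_pos (2 * c)
  rcases le_total 0 c with h | h
  · have h2 : 1 ≤ Real.exp (2 * c) := Real.one_le_exp (by linarith)
    rw [abs_of_nonneg h, h1, abs_of_nonneg (by linarith)]
  · have h2 : Real.exp (2 * c) ≤ 1 := Real.exp_le_one_iff.mpr (by linarith)
    rw [abs_of_nonpos h, Real.tanh_neg, h1, abs_of_nonpos (by linarith), neg_div]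

theorem H_lipschitz_aux (c x y : ℝ) :
    |Real.log ((Real.exp (x + 2 * c) + 1) / (Real.exp x + Real.exp (2 * c)))
      - Real.log ((Real.exp (y + 2 * c) + 1) / (Real.exp y + Real.exp (2 * c)))|
      ≤ Real.tanh |c| * |x - y| := by
  have hd : ∀ m : ℝ, HasDerivAt
      (fun m => Real.log ((Real.exp (m + 2 * c) + 1) / (Real.exp m + Real.exp (2 * c))))
      (Real.exp (m + 2 * c) / (Real.exp (m + 2 * c) + 1)
        - Real.exp m / (Real.exp m + Real.exp (2 * c))) m := by
    intro m
    have e : (fun m => Real.log ((Real.exp (m + 2 * c) + 1) / (Real.exp m + Real.exp (2 * c))))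
        = fun m => Real.log (Real.exp (m + 2 * c) + 1)
            - Real.log (Real.exp m + Real.exp (2 * c)) := by
      funext m
      exact Real.log_div (by positivity) (by positivity)
    rw [e]
    have a1 : HasDerivAt (fun m => Real.exp (m + 2 * c) + 1) (Real.exp (m + 2 * c)) m := by
      simpa using (((hasDerivAt_id m).add_const (2 * c)).exp).add_const 1
    have a2 : HasDerivAt (fun m => Real.exp m + Real.exp (2 * c)) (Real.exp m) m :=
      (Real.hasDerivAt_exp m).add_const _
    exact (a1.log (by positivity)).sub (a2.log (by positivity))
  have hb : ∀ m : ℝ, ‖Real.exp (m + 2 * c) / (Real.exp (m + 2 * c) + 1)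
        - Real.exp m / (Real.exp m + Real.exp (2 * c))‖ ≤ Real.tanh |c| := by
    intro m
    rw [tanh_abs_eq_aux, Real.exp_add, Real.norm_eq_abs]
    have hM := Real.exp_pos m
    have hK := Real.exp_pos (2 * c)
    generalize Real.exp m = M at *
    generalize Real.exp (2 * c) = K at *
    have e : M * K / (M * K + 1) - M / (M + K)
        = (K - 1) * ((M * (K + 1)) / ((M * K + 1) * (M + K))) := by
      field_simp
      ring
    rw [e, abs_mul, div_eq_mul_one_div |K - 1|]
    apply mul_le_mul_of_nonneg_left _ (abs_nonneg _)
    rw [abs_of_nonneg (by positivity), div_le_div_iff₀ (by positivity) (by positivity)]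
    nlinarith [mul_nonneg hK.le (sq_nonneg (M - 1))]
  have := convex_univ.norm_image_sub_le_of_norm_hasDerivWithin_le (s := Set.univ)
    (fun m _ => (hd m).hasDerivWithinAt) (fun m _ => hb m) (Set.mem_univ y) (Set.mem_univ x)
  simpa [Real.norm_eq_abs] using this

/-- On a single edge `{s,t}` of a binary pairwise MRF with symmetric potentials, the
α-BP log-ratio message update is an `ℓ^∞` contraction whenever
`|1−α| (1 + tanh|αθ|) < 1`. -/
theorem single_edge_alphaBP_contraction (α θ θs θt : ℝ)
    (H : ℝ → ℝ → ℝ)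
    (hH : ∀ μ κ, H μ κ = Real.log ((Real.exp (μ + κ) + 1) / (Real.exp μ + Real.exp κ)))
    (F : ℝ × ℝ → ℝ × ℝ)
    (hF : ∀ z : ℝ × ℝ, F z =
      ((1 - α) * z.1 + H (2 * θs + (1 - α) * z.2) (2 * α * θ),
       (1 - α) * z.2 + H (2 * θt + (1 - α) * z.1) (2 * α * θ)))
    (hcontr : |1 - α| * (1 + Real.tanh |α * θ|) < 1) :
    ∀ z w : ℝ × ℝ,
      max |(F z).1 - (F w).1| |(F z).2 - (F w).2|
        ≤ (|1 - α| * (1 + Real.tanh |α * θ|)) * max |z.1 - w.1| |z.2 - w.2| := by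
  intro z w
  have ht : 0 ≤ Real.tanh |α * θ| := by
    rw [tanh_abs_eq_aux]; positivity
  have key : ∀ a b d e q M : ℝ, |a - b| ≤ M → |d - e| ≤ M →
      |((1 - α) * a + H (q + (1 - α) * d) (2 * α * θ))
        - ((1 - α) * b + H (q + (1 - α) * e) (2 * α * θ))|
        ≤ (|1 - α| * (1 + Real.tanh |α * θ|)) * M := by
    intro a b d e q M h1 h2
    have hl := H_lipschitz_aux (α * θ) (q + (1 - α) * d) (q + (1 - α) * e)
    rw [show 2 * (α * θ) = 2 * α * θ by ring, ← hH, ← hH,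
      show q + (1 - α) * d - (q + (1 - α) * e) = (1 - α) * (d - e) by ring, abs_mul (1 - α)] at hl
    calc _ = |(1 - α) * (a - b) + (H (q + (1 - α) * d) (2 * α * θ)
          - H (q + (1 - α) * e) (2 * α * θ))| := by congr 1; ring
      _ ≤ |1 - α| * |a - b| + Real.tanh |α * θ| * (|1 - α| * |d - e|) := by
          refine (abs_add_le _ _).trans ?_
          rw [abs_mul]
          linarith
      _ ≤ |1 - α| * M + Real.tanh |α * θ| * (|1 - α| * M) := by gcongr
      _ = _ := by ring
  rw [hF, hF]
  exact max_le (key _ _ _ _ _ _ (le_max_left _ _) (le_max_right _ _))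
    (key _ _ _ _ _ _ (le_max_right _ _) (le_max_left _ _))
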